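/- Let P and Q be finite partially ordered sets and f : P → Q an order-preserving map. If for every q ∈ Q the geometric realization of the subposet f⁻¹(Q_{≥q}) = {p ∈ P : q ≤ f(p)} (with the order induced from P) is contractible, then |P| and |Q| are homotopy equivalent. -/

import Mathlib

open Classical

/-- The geometric realization of (the order complex of) a finite poset `P`:
points are convex combinations of elements of `P` whose support is a chain,
topologized as a subspace of `P → ℝ`. -/
abbrev GeomReal (P : Type*) [Fintype P] [PartialOrder P] : Type _ :=
  { f : P → ℝ // (∀ p, 0 ≤ f p) ∧ (∑ p, f p = 1) ∧ IsChain (· ≤ ·) {p | f p ≠ 0} }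

/-!
The proof is by contractible carriers. Assign to each `p : P` a contractible subspace `C p` of `Z`,
with `C q ⊆ C p` whenever `p ≤ q`. Then a map `|P| → Z` sending each `|P≥p|` into `C p` exists, and
any two such maps are homotopic. For both claims one extends a map from the part of `|P| × D` over
the boundary of a ball `D` to all of `|P| × D`, where `D` is a point or an interval, adding the
elements `p` in decreasing order: `|P≥p| × D` is a cone whose base is the part of it where the map
has already been defined, and the extension exists because `C p` is contractible.

For `C q = |f⁻¹(Q≥q)|` this gives `g : |Q| → |P|`. Both `|f| ∘ g` and the identity are carried by
`q ↦ |Q≥q|`, a cone, and both `g ∘ |f|` and the identity are carried by `p ↦ C (f p)`.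
-/

open Set Metric
open scoped unitInterval ContinuousMap

theorem exists_extension_of_contractibleSpace {X Y : Type*} [TopologicalSpace X] [NormalSpace X]
    [TopologicalSpace Y] [ContractibleSpace Y] {B F : Set X} (hB : IsClosed B) (hF : IsClosed F)
    (hBF : Disjoint B F) (f : C(↥Fᶜ, Y)) :
    ∃ g : C(X, Y), ∀ (x : X) (hx : x ∈ Fᶜ), x ∈ B → g x = f ⟨x, hx⟩ := by
  obtain ⟨c, ⟨H⟩⟩ := id_nullhomotopic Y
  obtain ⟨V, hV, hFV, hVB⟩ :=
    normal_exists_closure_subset hF hB.isOpen_compl hBF.subset_compl_left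
  obtain ⟨u, hu₀, hu₁, hu⟩ := exists_continuous_zero_one_of_isClosed hB isClosed_closure
    (disjoint_compl_right.mono_right hVB)
  -- Following `f x` along the contraction up to time `u x` makes the map constant near `F`.
  let g : X → Y := fun x ↦ if hx : x ∈ Fᶜ then H (⟨u x, hu x⟩, f ⟨x, hx⟩) else c
  have hg : ∀ x (hx : x ∈ Fᶜ), g x = H (⟨u x, hu x⟩, f ⟨x, hx⟩) := fun x hx ↦ dif_pos hx
  have hg_off : ContinuousOn g Fᶜ := by
    rw [continuousOn_iff_continuous_domRestrict]
    refine Continuous.congr (f := fun x : ↥Fᶜ ↦ H (⟨u x, hu x⟩, f x)) (by fun_prop) ?_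
    exact fun x ↦ (hg x x.2).symm
  have hg_near : ContinuousOn g V := by
    refine (continuousOn_const (c := c)).congr fun x hxV ↦ ?_
    by_cases hx : x ∈ Fᶜ
    · have : (⟨u x, hu x⟩ : I) = 1 := Subtype.ext (hu₁ (subset_closure hxV))
      simp [hg x hx, this]
    · exact dif_neg hx
  have hcover : Fᶜ ∪ V = univ := by
    rw [← compl_subset_iff_union, compl_compl]
    exact hFV
  have hgc : Continuous g := by
    rw [← continuousOn_univ, ← hcover]
    exact hg_off.union_of_isOpen hg_near hF.isOpen_compl hV
  refine ⟨⟨g, hgc⟩, fun x hx hxB ↦ ?_⟩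
  have : (⟨u x, hu x⟩ : I) = 0 := Subtype.ext (hu₀ hxB)
  simp [hg x hx, this]

theorem upperSet_induction {P : Type*} [Finite P] [PartialOrder P] {motive : Set P → Prop}
    (empty : motive ∅)
    (insert : ∀ S m, IsUpperSet S → m ∉ S → Ioi m ⊆ S → motive S → motive (insert m S))
    {S : Set P} (hS : IsUpperSet S) : motive S := by
  induction S using WellFoundedLT.induction with
  | ind S ih =>
    rcases S.eq_empty_or_nonempty with rfl | hne
    · exact empty
    obtain ⟨m, hmS, hmin⟩ := S.toFinite.exists_minimal hne
    have hupper : IsUpperSet (S \ {m}) := by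
      rintro a b hab ⟨haS, ham⟩
      refine ⟨hS hab haS, ?_⟩
      rintro rfl
      exact ham (hab.antisymm (hmin haS hab))
    have hIoi : Ioi m ⊆ S \ {m} := fun p hp ↦ ⟨hS hp.le hmS, hp.ne'⟩
    rw [← insert_sdiff_self_of_mem hmS]
    exact insert _ m hupper (fun h ↦ h.2 rfl) hIoi (ih _ (sdiff_singleton_ssubset.2 hmS) hupper)

theorem support_funOnFinite_linearMap_subset {R M X Y : Type*} [Semiring R] [AddCommMonoid M]
    [Module R M] [Finite X] [Finite Y] (f : X → Y) (x : X → M) :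
    Function.support (FunOnFinite.linearMap R M f x) ⊆ f '' Function.support x := by
  have := Fintype.ofFinite X
  intro b hb
  rw [Function.mem_support, FunOnFinite.linearMap_apply_apply] at hb
  obtain ⟨a, ha, hxa⟩ := Finset.exists_ne_zero_of_sum_ne_zero hb
  exact ⟨a, hxa, (Finset.mem_filter.1 ha).2⟩

namespace GeomReal

variable {P : Type*} [Fintype P] [PartialOrder P]

/-- The realization of the subposet `S`, as a subcomplex of the realization of `P`. -/
def supported (S : Set P) : Set (GeomReal P) :=
  {x | Function.support x.1 ⊆ S}

theorem mem_supported_iff {S : Set P} {x : GeomReal P} :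
    x ∈ supported S ↔ ∀ p ∉ S, x.1 p = 0 :=
  Function.support_subset_iff'

theorem supported_mono {S T : Set P} (h : S ⊆ T) : supported S ⊆ supported T :=
  fun _ hx ↦ hx.trans h

theorem continuous_coord (p : P) : Continuous fun x : GeomReal P ↦ x.1 p :=
  (continuous_apply p).comp continuous_subtype_val

theorem isClosed_supported (S : Set P) : IsClosed (supported S) := by
  have : supported S = ⋂ p ∈ Sᶜ, {x : GeomReal P | x.1 p = 0} := by
    ext x
    simp [mem_supported_iff]
  rw [this]
  exact isClosed_biInter fun p _ ↦ isClosed_eq (continuous_coord p) continuous_const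

theorem apply_le_one (x : GeomReal P) (p : P) : x.1 p ≤ 1 :=
  (Finset.single_le_sum (fun q _ ↦ x.2.1 q) (Finset.mem_univ p)).trans_eq x.2.2.1

theorem exists_apply_ne_zero (x : GeomReal P) : ∃ p, x.1 p ≠ 0 := by
  by_contra! h
  have := x.2.2.1
  simp [h] at this

theorem supported_empty : supported (∅ : Set P) = ∅ :=
  eq_empty_of_forall_notMem fun x hx ↦ (exists_apply_ne_zero x).elim fun _ hp ↦ hx hp

theorem supported_insert_subset {S : Set P} (hS : IsUpperSet S) {m : P} (hm : m ∉ S) :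
    supported (insert m S) ⊆ supported S ∪ supported (Ici m) := by
  intro x hx
  by_cases hxm : x.1 m = 0
  · left
    intro p hp
    exact (hx hp).resolve_left (by rintro rfl; exact hp hxm)
  · right
    intro p hp
    rcases x.2.2.2.total hp hxm with hpm | hmp
    · rcases hx hp with rfl | hpS
      · exact le_rfl
      · exact absurd (hS hpm hpS) hm
    · exact hmp

theorem mem_supported_Ioi_of_apply_eq_zero {m : P} {x : GeomReal P} (hx : x ∈ supported (Ici m))
    (hxm : x.1 m = 0) : x ∈ supported (Ioi m) :=
  fun _ hp ↦ lt_of_le_of_ne (hx hp) (by rintro rfl; exact hp hxm)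

section Cone

/-- The vertex `m`, as the apex of the cone `supported (Ici m)`. -/
noncomputable def apex (m : P) : supported (Ici m) :=
  ⟨⟨Pi.single m 1, (single_mem_stdSimplex ℝ m).1, (single_mem_stdSimplex ℝ m).2,
    (Set.subsingleton_singleton.anti Pi.support_single_subset).isChain⟩,
    fun _ hp ↦ (Pi.support_single_subset hp).ge⟩

/-- The homothety of the cone `supported (Ici m)` with centre its apex and ratio `c`. The bound on
`c` keeps the barycentric coordinate at `m`, which is `1 - c * (1 - x m)`, nonnegative. -/
noncomputable def dilate (m : P) (c : ℝ) (x : supported (Ici m)) (hc₀ : 0 ≤ c)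
    (hc : c * (1 - x.1.1 m) ≤ 1) : supported (Ici m) :=
  have hsupp (p : P) (hp : (c • x.1.1 + (1 - c) • Pi.single m 1 : P → ℝ) p ≠ 0) :
      p = m ∨ x.1.1 p ≠ 0 := by
    by_contra! h
    exact hp (by simp [h.1, h.2])
  have hnonneg (p : P) : 0 ≤ (c • x.1.1 + (1 - c) • Pi.single m 1 : P → ℝ) p := by
    by_cases hp : p = m
    · subst hp
      simp only [Pi.add_apply, Pi.smul_apply, Pi.single_eq_same, smul_eq_mul]
      linarith
    · simpa [hp] using mul_nonneg hc₀ (x.1.2.1 p)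
  have hsum : ∑ p, (c • x.1.1 + (1 - c) • Pi.single m 1 : P → ℝ) p = 1 := by
    simp [Finset.sum_add_distrib, ← Finset.mul_sum, x.1.2.2.1]
  ⟨⟨c • x.1.1 + (1 - c) • Pi.single m 1, hnonneg, hsum,
    (x.1.2.2.2.insert fun _ hp _ ↦ Or.inl (x.2 hp)).mono hsupp⟩,
    fun p hp ↦ (hsupp p hp).elim Eq.ge fun h ↦ x.2 h⟩

theorem dilate_apply_self (m : P) (c : ℝ) (x : supported (Ici m)) (hc₀ : 0 ≤ c)
    (hc : c * (1 - x.1.1 m) ≤ 1) :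
    (dilate m c x hc₀ hc).1.1 m = 1 - c * (1 - x.1.1 m) := by
  simp only [dilate, Pi.add_apply, Pi.smul_apply, Pi.single_eq_same, smul_eq_mul]
  ring

theorem dilate_zero (m : P) (x : supported (Ici m)) (hc₀ : (0 : ℝ) ≤ 0)
    (hc : 0 * (1 - x.1.1 m) ≤ 1) : dilate m 0 x hc₀ hc = apex m := by
  simp [dilate, apex]

theorem dilate_one (m : P) (x : supported (Ici m)) (hc₀ : (0 : ℝ) ≤ 1)
    (hc : 1 * (1 - x.1.1 m) ≤ 1) : dilate m 1 x hc₀ hc = x := by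
  simp [dilate]

theorem continuous_dilate (m : P) {X : Type*} [TopologicalSpace X] {c : X → ℝ}
    {x : X → supported (Ici m)} (hc₀ : ∀ a, 0 ≤ c a) (hc : ∀ a, c a * (1 - (x a).1.1 m) ≤ 1)
    (hc_cont : Continuous c) (hx : Continuous x) :
    Continuous fun a ↦ dilate m (c a) (x a) (hc₀ a) (hc a) := by
  refine .subtype_mk (.subtype_mk ?_ _) _
  fun_prop

theorem contractibleSpace_supported_Ici (m : P) : ContractibleSpace (supported (Ici m)) := by
  have hc (a : I × supported (Ici m)) : (σ a.1 : ℝ) * (1 - a.2.1.1 m) ≤ 1 :=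
    mul_le_one₀ (σ a.1).2.2 (sub_nonneg.2 (apply_le_one _ m)) (sub_le_self _ (a.2.1.2.1 m))
  rw [contractible_iff_id_nullhomotopic]
  refine ⟨apex m, ⟨{
    toFun a := dilate m (σ a.1) a.2 (σ a.1).2.1 (hc a)
    continuous_toFun := continuous_dilate m _ _ (by fun_prop) continuous_snd
    map_zero_left x := ?_
    map_one_left x := ?_ }⟩⟩
  · simp [dilate_one]
  · simp [dilate_zero]

section Gauge

variable {E : Type*} [SeminormedAddCommGroup E] {m : P}

/-- The radial coordinate, vanishing at the centre `(apex m, 0)`, which exhibits the product of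
`supported (Ici m)` with the unit ball as a cone over its level set `1`. -/
noncomputable def coneGauge (m : P) (y : supported (Ici m) × closedBall (0 : E) 1) : ℝ :=
  max (1 - y.1.1.1 m) ‖(y.2 : E)‖

theorem continuous_coneGauge :
    Continuous (coneGauge m : supported (Ici m) × closedBall (0 : E) 1 → ℝ) := by
  have hx : Continuous fun y : supported (Ici m) × closedBall (0 : E) 1 ↦ y.1.1.1 m :=
    (continuous_coord m).comp (by fun_prop)
  exact (continuous_const.sub hx).max (by fun_prop)

theorem coneGauge_nonneg (y : supported (Ici m) × closedBall (0 : E) 1) : 0 ≤ coneGauge m y :=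
  (norm_nonneg _).trans (le_max_right _ _)

theorem coneGauge_eq_one_iff {y : supported (Ici m) × closedBall (0 : E) 1} :
    coneGauge m y = 1 ↔ y.1.1.1 m = 0 ∨ ‖(y.2 : E)‖ = 1 := by
  have hx : 1 - y.1.1.1 m ≤ 1 := sub_le_self _ (y.1.1.2.1 m)
  have hs : ‖(y.2 : E)‖ ≤ 1 := mem_closedBall_zero_iff.1 y.2.2
  rw [coneGauge, ← (max_le hx hs).ge_iff_eq, le_max_iff, hx.ge_iff_eq, hs.ge_iff_eq, sub_eq_self]

end Gauge

variable {E : Type*} [SeminormedAddCommGroup E] [NormedSpace ℝ E] {m : P}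

/-- The projection of the cone of `coneGauge` from its centre onto its base. At the centre itself,
`0⁻¹ = 0` makes the value the centre. -/
noncomputable def coneProjection (m : P) (y : supported (Ici m) × closedBall (0 : E) 1) :
    supported (Ici m) × closedBall (0 : E) 1 :=
  have hinv : 0 ≤ (coneGauge m y)⁻¹ := inv_nonneg.2 (coneGauge_nonneg y)
  (dilate m (coneGauge m y)⁻¹ y.1 hinv
      (inv_mul_le_one_of_le₀ (le_max_left _ _) (coneGauge_nonneg y)),
    ⟨(coneGauge m y)⁻¹ • (y.2 : E), by
      rw [mem_closedBall_zero_iff, norm_smul, Real.norm_of_nonneg hinv]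
      exact inv_mul_le_one_of_le₀ (le_max_right _ _) (coneGauge_nonneg y)⟩)

theorem coneGauge_coneProjection {y : supported (Ici m) × closedBall (0 : E) 1}
    (hy : coneGauge m y ≠ 0) : coneGauge m (coneProjection m y) = 1 := by
  have hinv : 0 ≤ (coneGauge m y)⁻¹ := inv_nonneg.2 (coneGauge_nonneg y)
  calc coneGauge m (coneProjection m y)
      = max ((coneGauge m y)⁻¹ * (1 - y.1.1.1 m)) ((coneGauge m y)⁻¹ * ‖(y.2 : E)‖) := by
        rw [coneGauge, coneProjection, dilate_apply_self, norm_smul, Real.norm_of_nonneg hinv,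
          sub_sub_cancel]
    _ = (coneGauge m y)⁻¹ * coneGauge m y := (mul_max_of_nonneg _ _ hinv).symm
    _ = 1 := inv_mul_cancel₀ hy

theorem coneProjection_of_coneGauge_eq_one {y : supported (Ici m) × closedBall (0 : E) 1}
    (hy : coneGauge m y = 1) : coneProjection m y = y := by
  simp [coneProjection, hy, dilate_one]

theorem continuousOn_coneProjection :
    ContinuousOn (coneProjection m : supported (Ici m) × closedBall (0 : E) 1 → _)
      {y | coneGauge m y ≠ 0} := by
  rw [continuousOn_iff_continuous_domRestrict]
  have hinv : Continuous fun y : {y : supported (Ici m) × closedBall (0 : E) 1 //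
      coneGauge m y ≠ 0} ↦ (coneGauge m y.1)⁻¹ :=
    (continuous_coneGauge.comp continuous_subtype_val).inv₀ fun y ↦ y.2
  exact (continuous_dilate m _ _ hinv (by fun_prop)).prodMk (.subtype_mk (by fun_prop) _)

theorem exists_extension_cone {Y : Type*} [TopologicalSpace Y] [ContractibleSpace Y]
    (f : C({y : supported (Ici m) × closedBall (0 : E) 1 // coneGauge m y = 1}, Y)) :
    ∃ g : C(supported (Ici m) × closedBall (0 : E) 1, Y), ∀ y, g y.1 = f y := by
  let F : Set (supported (Ici m) × closedBall (0 : E) 1) := {y | coneGauge m y = 0}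
  let B : Set (supported (Ici m) × closedBall (0 : E) 1) := {y | coneGauge m y = 1}
  have hF : IsClosed F := isClosed_eq continuous_coneGauge continuous_const
  have hB : IsClosed B := isClosed_eq continuous_coneGauge continuous_const
  have hBF : Disjoint B F :=
    disjoint_left.2 fun y (h₁ : coneGauge m y = 1) (h₀ : coneGauge m y = 0) ↦ by simp [h₁] at h₀
  let r : C(↥Fᶜ, ↥B) :=
    { toFun y := ⟨coneProjection m y, coneGauge_coneProjection y.2⟩
      continuous_toFun := .subtype_mk (continuousOn_coneProjection.domRestrict) _ }
  obtain ⟨g, hg⟩ := exists_extension_of_contractibleSpace hB hF hBF (f.comp r)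
  refine ⟨g, fun y ↦ ?_⟩
  rw [hg y (disjoint_left.1 hBF y.2) y.2]
  exact congrArg f (Subtype.ext (coneProjection_of_coneGauge_eq_one y.2))

end Cone

section Carrier

variable {E : Type*} [SeminormedAddCommGroup E] {Z : Type*} [TopologicalSpace Z]

/-- A stage of the cell-by-cell construction of a map on the product of `GeomReal P` with the unit
ball of `E`: the part over the subposet `S`, together with the boundary sphere. -/
def stage (S : Set P) : Set (GeomReal P × closedBall (0 : E) 1) :=
  {y | y.1 ∈ supported S ∨ ‖(y.2 : E)‖ = 1}

theorem stage_univ : (stage univ : Set (GeomReal P × closedBall (0 : E) 1)) = univ :=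
  eq_univ_of_forall fun _ ↦ Or.inl (subset_univ _)

theorem mem_stage_empty {y : GeomReal P × closedBall (0 : E) 1} :
    y ∈ stage ∅ ↔ ‖(y.2 : E)‖ = 1 := by
  simp [stage, supported_empty]

theorem stage_mono {S T : Set P} (h : S ⊆ T) :
    (stage S : Set (GeomReal P × closedBall (0 : E) 1)) ⊆ stage T :=
  fun _ ↦ Or.imp_left (supported_mono h ·)

theorem isClosed_stage (S : Set P) :
    IsClosed (stage S : Set (GeomReal P × closedBall (0 : E) 1)) :=
  ((isClosed_supported S).preimage continuous_fst).union
    (isClosed_eq (by fun_prop) continuous_const)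

theorem mem_stage_iff_coneGauge_eq_one {S : Set P} {m : P} (hm : m ∉ S) (hS : Ioi m ⊆ S)
    (y : supported (Ici m) × closedBall (0 : E) 1) :
    (y.1.1, y.2) ∈ stage S ↔ coneGauge m y = 1 := by
  have : y.1.1 ∈ supported S ↔ y.1.1.1 m = 0 :=
    ⟨fun h ↦ mem_supported_iff.1 h m hm,
      fun h ↦ supported_mono hS (mem_supported_Ioi_of_apply_eq_zero y.1.2 h)⟩
  rw [coneGauge_eq_one_iff, ← this]
  rfl

/-- `G` is a continuous map on `D` carried by `C`: it sends the part of `D` over the realization of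
`Ici p` into `C p`. -/
structure IsCarriedOn (C : P → Set Z) (D : Set (GeomReal P × closedBall (0 : E) 1))
    (G : GeomReal P × closedBall (0 : E) 1 → Z) : Prop where
  continuousOn : ContinuousOn G D
  mem : ∀ p, ∀ y ∈ D, y.1 ∈ supported (Ici p) → G y ∈ C p

theorem IsCarriedOn.exists_extension_Ici [NormedSpace ℝ E] {C : P → Set Z} {S : Set P} {m : P}
    [ContractibleSpace (C m)] (hm : m ∉ S) (hS : Ioi m ⊆ S)
    {G : GeomReal P × closedBall (0 : E) 1 → Z} (hG : IsCarriedOn C (stage S) G) :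
    ∃ g : C(supported (Ici m) × closedBall (0 : E) 1, C m),
      ∀ y, (y.1.1, y.2) ∈ stage S → (g y : Z) = G (y.1.1, y.2) := by
  have hbase (y : {y : supported (Ici m) × closedBall (0 : E) 1 // coneGauge m y = 1}) :
      (y.1.1.1, y.1.2) ∈ stage S :=
    (mem_stage_iff_coneGauge_eq_one hm hS y.1).2 y.2
  obtain ⟨g, hg⟩ := exists_extension_cone
    { toFun y := (⟨G (y.1.1.1, y.1.2), hG.mem m _ (hbase y) y.1.1.2⟩ : C m)
      continuous_toFun := .subtype_mk
        (hG.continuousOn.comp_continuous (by fun_prop) hbase) _ }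
  refine ⟨g, fun y hy ↦ ?_⟩
  exact congrArg Subtype.val (hg ⟨y, (mem_stage_iff_coneGauge_eq_one hm hS y).1 hy⟩)

theorem IsCarriedOn.exists_extension_insert [NormedSpace ℝ E] {C : P → Set Z}
    (hC : Antitone C) {S : Set P} {m : P} [ContractibleSpace (C m)] (hS : IsUpperSet S)
    (hm : m ∉ S) (hIoi : Ioi m ⊆ S)
    {G : GeomReal P × closedBall (0 : E) 1 → Z} (hG : IsCarriedOn C (stage S) G) :
    ∃ G', EqOn G' G (stage S) ∧ IsCarriedOn C (stage (insert m S)) G' := by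
  obtain ⟨g, hg⟩ := hG.exists_extension_Ici hm hIoi
  let G' : GeomReal P × closedBall (0 : E) 1 → Z := fun y ↦
    if h : y.1 ∈ supported (Ici m) then g (⟨y.1, h⟩, y.2) else G y
  let K : Set (GeomReal P × closedBall (0 : E) 1) := Prod.fst ⁻¹' supported (Ici m)
  have hK (y) (hy : y ∈ K) : G' y = g (⟨y.1, hy⟩, y.2) := dif_pos hy
  have hstage : EqOn G' G (stage S) := by
    intro y hy
    by_cases hyK : y ∈ K
    · exact (hK y hyK).trans (hg (⟨y.1, hyK⟩, y.2) hy)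
    · exact dif_neg hyK
  have hcover : stage (insert m S) ⊆ stage S ∪ K := by
    rintro y (hy | hy)
    · exact (supported_insert_subset hS hm hy).imp_left Or.inl
    · exact Or.inl (Or.inr hy)
  have hcont : ContinuousOn G' K := by
    rw [continuousOn_iff_continuous_domRestrict]
    refine Continuous.congr (f := fun y : K ↦ (g (⟨y.1.1, y.2⟩, y.1.2) : Z)) (by fun_prop) ?_
    exact fun y ↦ (hK y y.2).symm
  refine ⟨G', hstage, ?_, fun p y hy hyp ↦ ?_⟩
  · exact ((hG.continuousOn.congr hstage).union_of_isClosed hcont (isClosed_stage S)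
      ((isClosed_supported _).preimage continuous_fst)).mono hcover
  · by_cases hyS : y ∈ stage S
    · exact hstage hyS ▸ hG.mem p y hyS hyp
    · have hyK : y ∈ K := (hcover hy).resolve_left hyS
      have hym : y.1.1 m ≠ 0 := fun h ↦
        hyS (Or.inl (supported_mono hIoi (mem_supported_Ioi_of_apply_eq_zero hyK h)))
      exact hK y hyK ▸ hC (hyp hym) (g _).2

theorem IsCarriedOn.exists_extension [NormedSpace ℝ E] {C : P → Set Z} (hC : Antitone C)
    (hcontr : ∀ p, ContractibleSpace (C p)) {φ : GeomReal P × closedBall (0 : E) 1 → Z}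
    (hφ : IsCarriedOn C (stage ∅) φ) {S : Set P} (hS : IsUpperSet S) :
    ∃ G, EqOn G φ (stage ∅) ∧ IsCarriedOn C (stage S) G := by
  refine upperSet_induction
    (motive := fun S ↦ ∃ G, EqOn G φ (stage ∅) ∧ IsCarriedOn C (stage S) G)
    ⟨φ, eqOn_refl _ _, hφ⟩ ?_ hS
  rintro S m hS hm hIoi ⟨G, hGφ, hG⟩
  obtain ⟨G', hG'G, hG'⟩ := hG.exists_extension_insert hC hS hm hIoi
  exact ⟨G', (hG'G.mono (stage_mono (empty_subset S))).trans hGφ, hG'⟩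

/-- `g` is carried by `C`: it sends the realization of `Ici p` into `C p`. -/
def IsCarriedBy (C : P → Set Z) (g : GeomReal P → Z) : Prop :=
  ∀ p, MapsTo g (supported (Ici p)) (C p)

theorem exists_isCarriedBy {C : P → Set Z} (hC : Antitone C)
    (hcontr : ∀ p, ContractibleSpace (C p)) : ∃ g : C(GeomReal P, Z), IsCarriedBy C g := by
  have hZ (x : GeomReal P) : Nonempty Z :=
    (exists_apply_ne_zero x).elim fun p _ ↦ ⟨(Classical.arbitrary (C p)).1⟩
  have hsphere : (stage ∅ : Set (GeomReal P × closedBall (0 : Fin 0 → ℝ) 1)) = ∅ :=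
    eq_empty_of_forall_notMem fun y hy ↦ by
      rw [mem_stage_empty, norm_of_subsingleton] at hy
      exact zero_ne_one hy
  obtain ⟨G, -, hG⟩ := IsCarriedOn.exists_extension (E := Fin 0 → ℝ) hC hcontr
    (φ := fun y ↦ (hZ y.1).some) (by rw [hsphere]; exact ⟨continuousOn_empty _, by simp⟩)
    isUpperSet_univ
  rw [stage_univ] at hG
  have hGc : Continuous G := continuousOn_univ.1 hG.continuousOn
  exact ⟨⟨fun x ↦ G (x, ⟨0, by simp⟩), by fun_prop⟩, fun p x hx ↦ hG.mem p _ (mem_univ _) hx⟩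

theorem isCarriedOn_ite {C : P → Set Z} {g₀ g₁ : C(GeomReal P, Z)}
    (h₀ : IsCarriedBy C g₀) (h₁ : IsCarriedBy C g₁) :
    IsCarriedOn C (stage ∅ : Set (GeomReal P × closedBall (0 : ℝ) 1))
      fun y ↦ if (y.2 : ℝ) ≤ 0 then g₀ y.1 else g₁ y.1 where
  continuousOn := by
    have hends : (stage ∅ : Set (GeomReal P × closedBall (0 : ℝ) 1)) =
        {y | (y.2 : ℝ) = 1} ∪ {y | (y.2 : ℝ) = -1} := by
      ext y
      rw [mem_stage_empty, Real.norm_eq_abs, abs_eq zero_le_one]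
      rfl
    rw [hends]
    refine ContinuousOn.union_of_isClosed ?_ ?_ (isClosed_eq (by fun_prop) continuous_const)
      (isClosed_eq (by fun_prop) continuous_const)
    · exact ContinuousOn.congr (f := fun y ↦ g₁ y.1) (by fun_prop)
        fun y (hy : (y.2 : ℝ) = 1) ↦ by simp [hy]
    · exact ContinuousOn.congr (f := fun y ↦ g₀ y.1) (by fun_prop)
        fun y (hy : (y.2 : ℝ) = -1) ↦ by simp [hy]
  mem p y _ hy := by
    split_ifs
    exacts [h₀ p hy, h₁ p hy]

theorem homotopic_of_isCarriedBy {C : P → Set Z} (hC : Antitone C)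
    (hcontr : ∀ p, ContractibleSpace (C p)) {g₀ g₁ : C(GeomReal P, Z)}
    (h₀ : IsCarriedBy C g₀) (h₁ : IsCarriedBy C g₁) : g₀.Homotopic g₁ := by
  obtain ⟨G, hG, hGC⟩ := (isCarriedOn_ite h₀ h₁).exists_extension hC hcontr isUpperSet_univ
  rw [stage_univ] at hGC
  have hGc : Continuous G := continuousOn_univ.1 hGC.continuousOn
  have hball (t : I) : 2 * (t : ℝ) - 1 ∈ closedBall (0 : ℝ) 1 := by
    rw [mem_closedBall_zero_iff, Real.norm_eq_abs, abs_le]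
    constructor <;> linarith [t.2.1, t.2.2]
  refine ⟨{
    toFun a := G (a.2, ⟨2 * a.1 - 1, hball a.1⟩)
    continuous_toFun := by fun_prop
    map_zero_left x := ?_
    map_one_left x := ?_ }⟩
  · rw [hG (mem_stage_empty.2 (by norm_num))]
    norm_num
  · rw [hG (mem_stage_empty.2 (by norm_num))]
    norm_num

end Carrier

section Map

variable {Q : Type*} [Fintype Q] [PartialOrder Q]

/-- The map of realizations induced by a monotone map, affine on each simplex. -/
noncomputable def map (f : P → Q) (hf : Monotone f) : C(GeomReal P, GeomReal Q) where
  toFun x :=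
    have hmem : FunOnFinite.linearMap ℝ ℝ f x.1 ∈ stdSimplex ℝ Q :=
      stdSimplex.image_linearMap f (mem_image_of_mem _ ⟨x.2.1, x.2.2.1⟩)
    ⟨FunOnFinite.linearMap ℝ ℝ f x.1, hmem.1, hmem.2,
      (hf.isChain_image x.2.2.2).mono (support_funOnFinite_linearMap_subset f x.1)⟩
  continuous_toFun := .subtype_mk
    ((FunOnFinite.continuous_linearMap ℝ ℝ f).comp continuous_subtype_val) _

theorem mapsTo_map_supported {f : P → Q} (hf : Monotone f) (T : Set Q) :
    MapsTo (map f hf) (supported (f ⁻¹' T)) (supported T) :=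
  fun x hx ↦ (support_funOnFinite_linearMap_subset f x.1).trans (image_subset_iff.2 hx)

theorem map_apply_of_injective {f : P → Q} (hf : Monotone f) (hinj : f.Injective)
    (x : GeomReal P) (p : P) : (map f hf x).1 (f p) = x.1 p := by
  simp [map, FunOnFinite.linearMap_apply_apply, hinj.eq_iff, Finset.sum_filter]

theorem ext_of_mem_supported {S : Set P} {x y : GeomReal P} (hx : x ∈ supported S)
    (hy : y ∈ supported S) (h : ∀ p ∈ S, x.1 p = y.1 p) : x = y := by
  ext p
  by_cases hp : p ∈ S
  · exact h p hp
  · rw [mem_supported_iff.1 hx p hp, mem_supported_iff.1 hy p hp]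

/-- The restriction of barycentric coordinates along an order embedding. -/
def comap (e : P ↪o Q) (y : supported (range e)) : GeomReal P where
  val := y.1.1 ∘ e
  property := by
    refine ⟨fun p ↦ y.1.2.1 (e p), ?_, fun p hp p' hp' hne ↦ ?_⟩
    · exact (Fintype.sum_of_injective e e.injective _ _ (mem_supported_iff.1 y.2)
        fun _ ↦ rfl).trans y.1.2.2.1
    · exact (y.1.2.2.2 hp hp' (e.injective.ne hne)).imp e.le_iff_le.1 e.le_iff_le.1

/-- The realization of a subposet is homeomorphic to the corresponding subcomplex. -/
noncomputable def homeomorphSupportedRange (e : P ↪o Q) :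
    GeomReal P ≃ₜ supported (range e) where
  toFun x := ⟨map e e.monotone x, mapsTo_map_supported e.monotone _ fun p _ ↦ mem_range_self p⟩
  invFun := comap e
  left_inv x := Subtype.ext (funext (map_apply_of_injective e.monotone e.injective x))
  right_inv y := by
    refine Subtype.ext (ext_of_mem_supported
      (mapsTo_map_supported e.monotone _ fun p _ ↦ mem_range_self p) y.2 ?_)
    rintro _ ⟨p, rfl⟩
    exact map_apply_of_injective e.monotone e.injective (comap e y) p
  continuous_toFun := .subtype_mk (map e e.monotone).continuous _
  continuous_invFun := .subtype_mk
    (continuous_pi fun p ↦ (continuous_coord (e p)).comp continuous_subtype_val) _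

theorem contractibleSpace_supported (S : Set P) [ContractibleSpace (GeomReal S)] :
    ContractibleSpace (supported S) := by
  have h := (homeomorphSupportedRange (OrderEmbedding.subtype (· ∈ S))).symm.contractibleSpace
  rwa [show range (OrderEmbedding.subtype (· ∈ S)) = S from Subtype.range_val] at h

end Map

end GeomReal

open GeomReal in
theorem quillen_fiber_lemma_ge_general {P Q : Type*} [Fintype P] [PartialOrder P]
    [Fintype Q] [PartialOrder Q] (f : P → Q) (hf : Monotone f)
    (h : ∀ q : Q, ContractibleSpace (GeomReal {p : P // q ≤ f p})) :
    ∃ e : GeomReal P ≃ₕ GeomReal Q, e.toFun = GeomReal.map f hf := by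
  let C : Q → Set (GeomReal P) := fun q ↦ supported (f ⁻¹' Ici q)
  have hC : Antitone C := fun q q' hqq' ↦ supported_mono (preimage_mono (Ici_subset_Ici.2 hqq'))
  have hC_contr (q : Q) : ContractibleSpace (C q) :=
    have : ContractibleSpace (GeomReal (f ⁻¹' Ici q)) := h q
    contractibleSpace_supported _
  have hIci : Antitone fun q : Q ↦ supported (Ici q) := fun q q' hqq' ↦
    supported_mono (Ici_subset_Ici.2 hqq')
  have hP (p : P) : supported (Ici p) ⊆ C (f p) := supported_mono fun _ hp ↦ hf hp
  have hf_C (q : Q) : MapsTo (map f hf) (C q) (supported (Ici q)) := mapsTo_map_supported hf _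
  obtain ⟨g, hg⟩ := exists_isCarriedBy hC hC_contr
  have hgf : (g.comp (map f hf)).Homotopic (.id _) :=
    homotopic_of_isCarriedBy (hC.comp_monotone hf) (fun p ↦ hC_contr (f p))
      (fun p ↦ (hg (f p)).comp ((hf_C (f p)).mono_left (hP p))) hP
  have hfg : ((map f hf).comp g).Homotopic (.id _) :=
    homotopic_of_isCarriedBy hIci contractibleSpace_supported_Ici
      (fun q ↦ (hf_C q).comp (hg q)) (fun q ↦ mapsTo_id _)
  exact ⟨⟨map f hf, g, hgf, hfg⟩, rfl⟩

/-- Quillen's fiber lemma (upper fibers): if all preimages of principal up-sets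
are contractible, the realizations are homotopy equivalent. -/
theorem quillen_fiber_lemma_ge {P Q : Type} [Fintype P] [PartialOrder P]
    [Fintype Q] [PartialOrder Q] (f : P → Q) (hf : Monotone f)
    (h : ∀ q : Q, ContractibleSpace (GeomReal {p : P // q ≤ f p})) :
    Nonempty (ContinuousMap.HomotopyEquiv (GeomReal P) (GeomReal Q)) := by
  obtain ⟨e, -⟩ := quillen_fiber_lemma_ge_general f hf h
  exact ⟨e⟩
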